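/- For every integer r ≥ 3, there do not exist complex numbers x₁,…,x_{r+1} and pairwise distinct complex numbers z₁,…,z_{r+1} lying in ℚ(√−11) such that ∑_{i=1}^{r+1} x_i·z_i^j = (−2)^j/(j+1)! for every integer 0 ≤ j ≤ 2r. (Equivalently: there is no quadrature formula of degree 2r for the Bessel weight with r+1 nodes on ℚ(√−11).) -/

import Mathlib

/-!
# No Bessel quadrature of degree `2r` with `r + 1` nodes in `ℚ(√-11)`

Write `N = r + 1` and let `F = ∏ (β i X - α i)` be the nodal polynomial, with `α i / β i` the nodes
and `α i, β i` in the ring of integers `𝓞 = ℤ[θ]`, `θ = (1 + √-11) / 2`. A quadrature formula of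
degree `2r` makes `F` orthogonal, for the moment functional `X ^ j ↦ m_j`, to all polynomials of
degree at most `N - 2`. The space of such polynomials of degree at most `N` is spanned by the
Bessel polynomials of degrees `N` and `N - 1`, so every coefficient of `F` is an explicit integral
combination of the two coefficients `F_0` and `F_N` (`orth_relation`, transported to `𝓞` as
`Ok.Rel`). After dividing out common factors, the pairs `(α i, β i)` may be assumed primitive at a
given prime `p`, and `F` then cannot vanish modulo `p`; moreover, if the first `t` coefficients of
`F` vanish modulo `p`, at least `t` of the `α i` are divisible by `p`, whence `p ^ (t - k) ∣ F_k`
(`pow_dvd_of_dvd_coeff`).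

* `N ≠ 5`: take `p = 2`, which is inert, with residue field `𝔽₄`. Modulo `2` the Bessel
  polynomials become the Morgan-Voyce polynomials `b_n, B_n`, so the reduction of `F` is
  `A b_N + B X B_N`, and it splits over `𝔽₄`. If `A ≠ 0` this polynomial has
  degree at least `N - 1`, and its roots are simple and nonzero; as `𝔽₄` has only three nonzero
  elements, `N ≥ 4` leaves only `N = 4` with all three as roots, and `1` is then not a root. Hence
  `A = 0`. The doubling formulas for `b_n, B_n` in characteristic two then leave only
  `N = 6`, `N = 10` and `4 ∣ N` (`N = 5` being excluded). For `N = 6, 10` the reduction has a root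
  of multiplicity at least four at `1`, respectively at `θ`, and the quadratic Taylor coefficient of
  `F` there yields a contradiction modulo `4` (`Ok.two_case_taylor`). For `N = 2 ^ a s` with `s` odd
  and `a ≥ 2`, the coefficient of index `2 ^ (a - 1)` yields one
  (`Ok.two_case_zero_mod_four`).
* `N = 5`: take `p = θ`, a prime above the split prime `3`. The relations make the top four
  coefficients divisible by `θ`; the divisibility statement, applied to the reversed polynomial,
  then forces `F` to vanish modulo `θ` (`Ok.three_case`).
-/

namespace BesselQuadrature

section
open Polynomial

/-! ### Orthogonality relations over `ℂ` -/

/-- The odd factorial `(2k - 1)!!`, with value `1` at `k = 0`. -/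
def oddFac : ℕ → ℕ
  | 0 => 1
  | k + 1 => (2 * k + 1) * oddFac k

/-- The coefficient of `X ^ k` in the Bessel polynomial of degree `N`, normalised to have constant
term `1`: `(2k - 1)!! * choose (N + k) (2k)`. -/
def bb (N k : ℕ) : ℕ := oddFac k * (N + k).choose (2 * k)

/-- The difference `bb N k - bb (N - 1) k` of coefficients of consecutive Bessel polynomials; the
case split avoids the truncated subtraction at `k = 0`. -/
def cc (N k : ℕ) : ℕ := oddFac k * if k = 0 then 0 else (N + k - 1).choose (2 * k - 1)

lemma oddFac_spec (k : ℕ) : oddFac k * (2 ^ k * k.factorial) = (2 * k).factorial := by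
  induction k with
  | zero => simp [oddFac]
  | succ k ih =>
    rw [show 2 * (k + 1) = 2 * k + 1 + 1 by ring, Nat.factorial_succ, Nat.factorial_succ,
      Nat.factorial_succ, ← ih, oddFac]
    ring

lemma bb_succ (N k : ℕ) : bb (N + 1) k = bb N k + cc (N + 1) k := by
  rcases k with _ | k
  · simp [bb, cc]
  · simp only [bb, cc, Nat.succ_ne_zero, if_false]
    rw [show N + 1 + (k + 1) = (N + (k + 1)) + 1 by ring,
      show 2 * (k + 1) = (2 * k + 1) + 1 by ring, Nat.choose_succ_succ]
    simp only [Nat.add_sub_cancel]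
    ring

/-- The Bessel polynomial of degree `N` is orthogonal to `X ^ j` for `j < N`: up to a constant, the
sum is the `N`-th finite difference of a polynomial of degree `N - j - 1`. -/
lemma bb_orth (N j : ℕ) (hj : j < N) :
    ∑ k ∈ Finset.range (N + 1), (bb N k : ℂ) * ((-2) ^ (k + j) / ((k + j + 1).factorial : ℂ)) = 0 := by
  obtain ⟨t, rfl⟩ := Nat.exists_eq_add_of_lt hj
  set N := j + t + 1 with hN
  set P : ℂ[X] := (ascPochhammer ℂ t).comp (X + C ((j + 2 : ℕ) : ℂ)) with hP
  have hdeg : P.natDegree < N := by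
    rw [hP, natDegree_comp, ascPochhammer_natDegree, natDegree_X_add_C]; omega
  have h0 := congrFun (Polynomial.fwdDiff_iter_eq_zero_of_degree_lt hdeg) 0
  rw [fwdDiff_iter_eq_sum_shift] at h0
  have hev (k : ℕ) : P.eval (k : ℂ) = ((N + k).factorial : ℂ) / ((k + j + 1).factorial : ℂ) := by
    rw [hP, eval_comp, eval_add, eval_X, eval_C, ← Nat.cast_add, ← ascPochhammer_eval_cast,
      ascPochhammer_nat_eq_ascFactorial, eq_div_iff (Nat.cast_ne_zero.2 (Nat.factorial_ne_zero _)), mul_comm]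
    have := Nat.factorial_mul_ascFactorial (k + j + 1) t
    rw [show k + (j + 2) = k + j + 1 + 1 by ring]
    rw [show N + k = k + j + 1 + t by omega, ← this]
    push_cast; ring
  have key : ∀ k ∈ Finset.range (N + 1),
      (bb N k : ℂ) * ((-2) ^ (k + j) / ((k + j + 1).factorial : ℂ)) =
      ((-2) ^ j * (-1) ^ N / (N.factorial : ℂ)) *
        (((-1 : ℤ) ^ (N - k) * N.choose k) • P.eval (0 + k • (1 : ℂ))) := by
    intro k hk
    have hk : k ≤ N := by simpa [Nat.lt_succ_iff] using hk
    rw [nsmul_one, zero_add, hev, zsmul_eq_mul]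
    have e1 : (bb N k : ℂ) * 2 ^ k * N.factorial = N.choose k * (N + k).factorial := by
      have a1 := Nat.choose_mul_factorial_mul_factorial hk
      have a2 := Nat.choose_mul_factorial_mul_factorial (show 2 * k ≤ N + k by omega)
      rw [show N + k - 2 * k = N - k by omega] at a2
      have a3 := oddFac_spec k
      have : bb N k * 2 ^ k * N.factorial = N.choose k * (N + k).factorial := by
        rw [← a1, ← a2, ← a3, bb]; ring
      exact_mod_cast this
    have e2 : (-2 : ℂ) ^ (k + j) = (-1) ^ k * 2 ^ k * (-2) ^ j := by
      rw [pow_add, ← mul_pow]; norm_num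
    have e3 : (-1 : ℂ) ^ N * (-1) ^ (N - k) = (-1) ^ k := by
      rw [← pow_add, show N + (N - k) = 2 * (N - k) + k by omega, pow_add, pow_mul]; simp
    push_cast
    have f1 : (N.factorial : ℂ) ≠ 0 := Nat.cast_ne_zero.2 (Nat.factorial_ne_zero _)
    have f2 : ((k + j + 1).factorial : ℂ) ≠ 0 := Nat.cast_ne_zero.2 (Nat.factorial_ne_zero _)
    rw [e2, mul_div_assoc', mul_div_assoc', div_mul_div_comm, div_eq_div_iff f2 (mul_ne_zero f1 f2)]
    linear_combination ((-1) ^ k * (-2) ^ j * ((k + j + 1).factorial : ℂ)) * e1 -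
      (N.choose k * (N + k).factorial * (-2) ^ j * ((k + j + 1).factorial : ℂ)) * e3
  rw [Finset.sum_congr rfl key, ← Finset.mul_sum, h0]
  simp

/-- A polynomial of degree at most `N` without constant and leading terms, orthogonal to `X ^ j` for
`j ≤ N - 2`, vanishes. The polynomial `P M = ∑ d k (-2) ^ k M (M - 1) ⋯ (M - (N - k) + 1)` of degree
at most `N - 1` has the `N` roots `0, N + 1, …, 2N - 1`; being zero, its values at `0, 1, 2, …` give
`d N, d (N - 1), …` one after the other. -/
lemma orth_unique (N : ℕ) (hN : 1 ≤ N) (d : ℕ → ℂ) (h0 : d 0 = 0) (h1 : d N = 0)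
    (h : ∀ j, j + 2 ≤ N → ∑ k ∈ Finset.range (N + 1),
      d k * ((-2) ^ (k + j) / ((k + j + 1).factorial : ℂ)) = 0) :
    ∀ k ≤ N, d k = 0 := by
  -- `P` has degree at most `N - 1` because `d 0 = 0`.
  set P : ℂ[X] := ∑ k ∈ Finset.range (N + 1), C (d k * (-2) ^ k) * descPochhammer ℂ (N - k) with hP
  have hev (M : ℕ) : P.eval (M : ℂ) =
      ∑ k ∈ Finset.range (N + 1), d k * (-2) ^ k * (M.descFactorial (N - k) : ℂ) := by
    rw [hP, eval_finsetSum]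
    refine Finset.sum_congr rfl fun k _ => ?_
    rw [eval_mul, eval_C, descPochhammer_eval_eq_descFactorial]
  have hdeg : P.natDegree < Fintype.card (Fin N) := by
    rw [Fintype.card_fin]
    refine lt_of_le_of_lt (natDegree_sum_le_of_forall_le (n := N - 1) _ _ fun k hk => ?_) (by omega)
    rcases Nat.eq_zero_or_pos k with rfl | hk'
    · simp [h0]
    · refine (natDegree_C_mul_le _ _).trans ?_
      rw [descPochhammer_natDegree]; omega
  have hzero : P = 0 := by
    refine eq_zero_of_natDegree_lt_card_of_eval_eq_zero P
      (f := fun i : Fin N => (((if (i : ℕ) = 0 then 0 else N + i : ℕ)) : ℂ)) ?_ ?_ hdeg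
    · intro i i' hii
      have hii : (if (i : ℕ) = 0 then 0 else N + i : ℕ) = if (i' : ℕ) = 0 then 0 else N + i' := by
        exact Nat.cast_injective hii
      ext
      split_ifs at hii <;> omega
    · intro i
      rw [hev]
      split_ifs with hi
      · refine Finset.sum_eq_zero fun k hk => ?_
        rcases eq_or_ne k N with rfl | hkN
        · simp [h1]
        · have : k < N + 1 := Finset.mem_range.1 hk
          rw [Nat.descFactorial_of_lt (by omega)]; simp
      · obtain ⟨j, hj⟩ := Nat.exists_eq_succ_of_ne_zero hi
        have hj2 : j + 2 ≤ N := by have := i.2; omega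
        have hh := h j hj2
        have : ∀ k ∈ Finset.range (N + 1),
            d k * (-2) ^ k * ((N + i : ℕ).descFactorial (N - k) : ℂ) =
            ((N + i).factorial / (-2) ^ j) *
              (d k * ((-2) ^ (k + j) / ((k + j + 1).factorial : ℂ))) := by
          intro k hk
          have hk : k < N + 1 := Finset.mem_range.1 hk
          have := Nat.factorial_mul_descFactorial (show N - k ≤ N + i by omega)
          rw [show N + (i : ℕ) - (N - k) = k + j + 1 by omega] at this
          rw [← this]
          have f2 : ((k + j + 1).factorial : ℂ) ≠ 0 := Nat.cast_ne_zero.2 (Nat.factorial_ne_zero _)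
          push_cast
          field_simp
          ring
        rw [Finset.sum_congr rfl this, ← Finset.mul_sum, hh, mul_zero]
  have main : ∀ M, M ≤ N → d (N - M) = 0 := by
    intro M
    induction M using Nat.strong_induction_on with
    | _ M ih =>
      intro hM
      have e := hev M
      rw [hzero, eval_zero, Finset.sum_eq_single (N - M)] at e
      · rw [show N - (N - M) = M by omega, Nat.descFactorial_self] at e
        have : (M.factorial : ℂ) ≠ 0 := Nat.cast_ne_zero.2 (Nat.factorial_ne_zero _)
        simpa [this] using e.symm
      · intro k hk hkM
        have hk : k < N + 1 := Finset.mem_range.1 hk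
        rcases lt_or_ge M (N - k) with hlt | hge
        · rw [Nat.descFactorial_of_lt hlt]; simp
        · have := ih (N - k) (by omega) (by omega)
          rw [show N - (N - k) = k by omega] at this
          simp [this]
      · intro hh; exact absurd (Finset.mem_range.2 (by omega)) hh
  intro k hk
  have := main (N - k) (by omega)
  rwa [show N - (N - k) = k by omega] at this

lemma bb_zero (N : ℕ) : bb N 0 = 1 := by simp [bb, oddFac]
lemma cc_zero (N : ℕ) : cc N 0 = 0 := by simp [cc]
lemma bb_self (N : ℕ) : bb N N = oddFac N := by simp [bb, two_mul]
lemma cc_self (N : ℕ) (hN : 1 ≤ N) : cc N N = oddFac N := by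
  simp [cc, two_mul, show N ≠ 0 by omega]
lemma bb_of_lt (N k : ℕ) (h : N < k) : bb N k = 0 := by
  simp [bb, Nat.choose_eq_zero_of_lt (show N + k < 2 * k by omega)]

/-- A polynomial of degree at most `N` orthogonal to `X ^ j` for `j ≤ N - 2` is a combination of the
Bessel polynomials of degrees `N` and `N - 1`; the weights are read off from its extreme
coefficients. -/
lemma orth_relation (N : ℕ) (hN : 1 ≤ N) (f : ℕ → ℂ)
    (h : ∀ j, j + 2 ≤ N → ∑ k ∈ Finset.range (N + 1),
      f k * ((-2) ^ (k + j) / ((k + j + 1).factorial : ℂ)) = 0) :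
    ∀ k ≤ N, (oddFac N : ℂ) * f k =
      oddFac N * f 0 * bb N k + (f N - oddFac N * f 0) * cc N k := by
  obtain ⟨n, rfl⟩ : ∃ n, N = n + 1 := ⟨N - 1, by omega⟩
  have := orth_unique (n + 1) hN (fun k => (oddFac (n + 1) : ℂ) * f k -
    (oddFac (n + 1) * f 0 * bb (n + 1) k + (f (n + 1) - oddFac (n + 1) * f 0) * cc (n + 1) k))
    (by simp [bb_zero, cc_zero]) (by simp [bb_self, cc_self]; ring) ?_
  · intro k hk
    exact sub_eq_zero.1 (this k hk)
  · intro j hj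
    have b1 := bb_orth (n + 1) j (by omega)
    have b0 := bb_orth n j (by omega)
    have b0' : ∑ k ∈ Finset.range (n + 1 + 1),
        (bb n k : ℂ) * ((-2) ^ (k + j) / ((k + j + 1).factorial : ℂ)) = 0 := by
      rw [Finset.sum_range_succ, b0, bb_of_lt n (n + 1) (by omega)]; simp
    have hc (k : ℕ) : (cc (n + 1) k : ℂ) = bb (n + 1) k - bb n k := by
      rw [bb_succ]; push_cast; ring
    calc _ = oddFac (n + 1) * ∑ k ∈ Finset.range (n + 1 + 1),
              f k * ((-2) ^ (k + j) / ((k + j + 1).factorial : ℂ))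
            - f (n + 1) * ∑ k ∈ Finset.range (n + 1 + 1),
              (bb (n + 1) k : ℂ) * ((-2) ^ (k + j) / ((k + j + 1).factorial : ℂ))
            + (f (n + 1) - oddFac (n + 1) * f 0) * ∑ k ∈ Finset.range (n + 1 + 1),
              (bb n k : ℂ) * ((-2) ^ (k + j) / ((k + j + 1).factorial : ℂ)) := by
          rw [Finset.mul_sum, Finset.mul_sum, Finset.mul_sum, ← Finset.sum_sub_distrib,
            ← Finset.sum_add_distrib]
          refine Finset.sum_congr rfl fun k _ => ?_
          rw [hc]; ring
      _ = 0 := by rw [h j hj, b1, b0']; ring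

/-! ### Products of linear forms -/

section lin
variable {R : Type*} [CommRing R]

/-- The product of the linear forms `β i * X - α i`. -/
noncomputable def lin {ι : Type*} (s : Finset ι) (α β : ι → R) : R[X] :=
  ∏ i ∈ s, (C (β i) * X - C (α i))

variable {ι : Type*}

lemma lin_insert [DecidableEq ι] {s : Finset ι} {i : ι} (hi : i ∉ s) (α β : ι → R) :
    lin (insert i s) α β = (C (β i) * X - C (α i)) * lin s α β := by
  rw [lin, Finset.prod_insert hi, lin]

lemma coeff_lin_insert_zero [DecidableEq ι] {s : Finset ι} {i : ι} (hi : i ∉ s) (α β : ι → R) :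
    (lin (insert i s) α β).coeff 0 = - α i * (lin s α β).coeff 0 := by
  rw [lin_insert hi]; simp [sub_mul, mul_assoc, mul_coeff_zero]

lemma coeff_lin_insert_succ [DecidableEq ι] {s : Finset ι} {i : ι} (hi : i ∉ s) (α β : ι → R) (k : ℕ) :
    (lin (insert i s) α β).coeff (k + 1) =
      β i * (lin s α β).coeff k - α i * (lin s α β).coeff (k + 1) := by
  rw [lin_insert hi, sub_mul, mul_assoc, coeff_sub, coeff_C_mul, coeff_C_mul, coeff_X_mul]

lemma natDegree_lin_le (s : Finset ι) (α β : ι → R) : (lin s α β).natDegree ≤ s.card := by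
  refine (natDegree_prod_le _ _).trans ?_
  rw [Finset.card_eq_sum_ones]
  refine Finset.sum_le_sum fun i _ => ?_
  refine (natDegree_sub_le _ _).trans ?_
  simpa using (natDegree_C_mul_le (β i) X).trans natDegree_X_le

lemma coeff_lin_of_lt (s : Finset ι) (α β : ι → R) {k : ℕ} (h : s.card < k) :
    (lin s α β).coeff k = 0 :=
  coeff_eq_zero_of_natDegree_lt ((natDegree_lin_le s α β).trans_lt h)

/-- Exchanging `α` and `β` reverses the polynomial, up to sign. -/
lemma coeff_lin_swap (s : Finset ι) (α β : ι → R) : ∀ k ≤ s.card,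
    (lin s α β).coeff k = (-1) ^ s.card * (lin s β α).coeff (s.card - k) := by
  classical
  induction s using Finset.induction_on with
  | empty => intro k hk; simp [lin] at hk ⊢; simp [hk]
  | insert i s hi ih =>
    rw [Finset.card_insert_of_notMem hi]
    intro k hk
    rcases k with _ | k
    · rw [coeff_lin_insert_zero hi, Nat.sub_zero, coeff_lin_insert_succ hi, ih 0 (Nat.zero_le _),
        coeff_lin_of_lt s β α (Nat.lt_succ_self _), Nat.sub_zero]
      ring
    · rw [coeff_lin_insert_succ hi, ih k (by omega)]
      rcases (show k ≤ s.card by omega).eq_or_lt with rfl | hlt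
      · rw [coeff_lin_of_lt s α β (Nat.lt_succ_self _), Nat.sub_self, Nat.sub_self,
          coeff_lin_insert_zero hi]
        ring
      · rw [ih (k + 1) (by omega), show s.card + 1 - (k + 1) = (s.card - (k + 1)) + 1 by omega,
          coeff_lin_insert_succ hi, show s.card - k = s.card - (k + 1) + 1 by omega]
        ring

lemma lin_taylor (s : Finset ι) (α β : ι → R) (τ : R) :
    taylor τ (lin s α β) = lin s (fun i => α i - β i * τ) β := by
  rw [lin, lin, taylor_apply, prod_comp]
  refine Finset.prod_congr rfl fun i _ => ?_
  simp
  ring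

lemma lin_map {K : Type*} [CommRing K] (κ : R →+* K) (s : Finset ι) (α β : ι → R) :
    (lin s α β).map κ = lin s (fun i => κ (α i)) (fun i => κ (β i)) := by
  simp [lin, Polynomial.map_prod]

lemma lin_eval_eq_zero (s : Finset ι) (α β : ι → R) (i : ι) (hi : i ∈ s) (z : R)
    (h : β i * z = α i) : (lin s α β).eval z = 0 := by
  rw [lin, eval_prod]
  exact Finset.prod_eq_zero hi (by simp [h])

variable (p : R)

open Classical in
/-- Each coefficient of index `k` is a sum of products involving all but `k` of the `α i`. -/
lemma pow_dvd_coeff_lin (s : Finset ι) (α β : ι → R) : ∀ k,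
    p ^ ((s.filter fun i => p ∣ α i).card - k) ∣ (lin s α β).coeff k := by
  classical
  induction s using Finset.induction_on with
  | empty => intro k; simp
  | insert i s hi ih =>
    intro k
    rw [Finset.filter_insert]
    split_ifs with hd
    · rw [Finset.card_insert_of_notMem (by simp [hi])]
      rcases k with _ | k
      · rw [coeff_lin_insert_zero hi, Nat.sub_zero, pow_succ']
        exact mul_dvd_mul (hd.neg_right) (by simpa using ih 0)
      · rw [coeff_lin_insert_succ hi, Nat.add_sub_add_right]
        refine dvd_sub ((ih k).mul_left _) ?_
        refine (pow_dvd_pow p (?_ : _ ≤ _ - (k + 1) + 1)).trans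
          ((pow_succ' p _).dvd.trans (mul_dvd_mul hd (ih (k + 1))))
        omega
    · rcases k with _ | k
      · rw [coeff_lin_insert_zero hi]
        exact (ih 0).mul_left _
      · rw [coeff_lin_insert_succ hi]
        exact dvd_sub (((pow_dvd_pow p (by omega)).trans (ih k)).mul_left _) ((ih (k + 1)).mul_left _)

variable {K : Type*} [CommRing K] [IsDomain K] (κ : R →+* K)

open Classical in
/-- If the first `t` coefficients vanish modulo `p`, then `X ^ t` divides the reduction, and by
primitivity only the factors with `p ∣ α i` contribute powers of `X`. -/
lemma count_of_dvd_coeff (hκ : ∀ x, κ x = 0 ↔ p ∣ x) (s : Finset ι) (α β : ι → R)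
    (hprim : ∀ i ∈ s, ¬ (p ∣ α i ∧ p ∣ β i)) (t : ℕ)
    (h : ∀ k < t, p ∣ (lin s α β).coeff k) :
    t ≤ (s.filter fun i => p ∣ α i).card := by
  by_contra! hlt
  have h1 := (hκ _).2 (h _ hlt)
  rw [← coeff_map, lin_map, lin, ← Finset.prod_filter_mul_prod_filter_not s (fun i => p ∣ α i)] at h1
  have e1 : ∏ i ∈ s.filter (fun i => p ∣ α i), (C (κ (β i)) * X - C (κ (α i))) =
      C (∏ i ∈ s.filter (fun i => p ∣ α i), κ (β i)) *
        X ^ (s.filter fun i => p ∣ α i).card := by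
    rw [map_prod, ← Finset.prod_const, ← Finset.prod_mul_distrib]
    refine Finset.prod_congr rfl fun i hi => ?_
    rw [(hκ _).2 (Finset.mem_filter.1 hi).2]; simp
  rw [e1, mul_assoc, coeff_C_mul, coeff_X_pow_mul', if_pos le_rfl, Nat.sub_self, coeff_zero_prod]
    at h1
  rcases mul_eq_zero.1 h1 with h2 | h2
  · obtain ⟨i, hi, h3⟩ := Finset.prod_eq_zero_iff.1 h2
    have := Finset.mem_filter.1 hi
    exact hprim i this.1 ⟨this.2, (hκ _).1 h3⟩
  · obtain ⟨i, hi, h3⟩ := Finset.prod_eq_zero_iff.1 h2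
    have := Finset.mem_filter.1 hi
    exact this.2 ((hκ _).1 (by simpa using h3))

lemma pow_dvd_of_dvd_coeff (hκ : ∀ x, κ x = 0 ↔ p ∣ x) (s : Finset ι) (α β : ι → R)
    (hprim : ∀ i ∈ s, ¬ (p ∣ α i ∧ p ∣ β i)) (t : ℕ)
    (h : ∀ k < t, p ∣ (lin s α β).coeff k) (k e : ℕ) (he : e + k ≤ t) :
    p ^ e ∣ (lin s α β).coeff k := by
  classical
  have := count_of_dvd_coeff p κ hκ s α β hprim t h
  exact (pow_dvd_pow p (by omega)).trans (pow_dvd_coeff_lin p s α β k)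

/-- A pair with `β ≠ 0` can be divided by a power of `p` so as not to be divisible by `p` any more. -/
lemma exists_primitive [IsDomain R] [WfDvdMonoid R] (hp : ¬ IsUnit p) (α β : R) (hβ : β ≠ 0) :
    ∃ (e : ℕ) (α' β' : R), α = p ^ e * α' ∧ β = p ^ e * β' ∧ ¬ (p ∣ α' ∧ p ∣ β') := by
  obtain ⟨β', h1, h2⟩ := (FiniteMultiplicity.of_not_isUnit hp hβ).exists_eq_pow_mul_and_not_dvd
  set n := multiplicity p β
  by_cases h : p ^ n ∣ α
  · obtain ⟨α', h3⟩ := h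
    exact ⟨n, α', β', h3, h1, fun h => h2 h.2⟩
  · have hα : α ≠ 0 := by rintro rfl; exact h (dvd_zero _)
    obtain ⟨α', h3, h4⟩ := (FiniteMultiplicity.of_not_isUnit hp hα).exists_eq_pow_mul_and_not_dvd
    set m := multiplicity p α
    have hmn : m ≤ n := by
      by_contra! hlt
      exact h ((pow_dvd_pow p hlt.le).trans ⟨α', h3⟩)
    refine ⟨m, α', p ^ (n - m) * β', h3, ?_, fun h => h4 h.1⟩
    rw [← mul_assoc, ← pow_add, Nat.add_sub_cancel' hmn]; exact h1

end lin

/-! ### The ring of integers and its residue fields -/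

/-- The ring of integers `ℤ[θ]` of `ℚ(√-11)`, with `θ ^ 2 = θ - 3`. -/
abbrev Ok := QuadraticAlgebra ℤ (-3) 1

namespace Ok

/-- The complex number `(1 + √-11) / 2`. -/
noncomputable def θc : ℂ := (1 + (Real.sqrt 11 : ℂ) * Complex.I) / 2

lemma θc_sq : θc * θc = (-3 : ℤ) • (1 : ℂ) + (1 : ℤ) • θc := by
  have h : (Real.sqrt 11 : ℂ) ^ 2 = 11 := by
    rw [← Complex.ofReal_pow, Real.sq_sqrt (by norm_num)]; norm_num
  simp only [θc, one_smul, zsmul_eq_mul]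
  push_cast
  linear_combination (Complex.I ^ 2 / 4) * h + (11 / 4) * Complex.I_sq

/-- The embedding of `ℤ[θ]` into `ℂ`. -/
noncomputable def φ : Ok →+* ℂ := (QuadraticAlgebra.lift ⟨θc, θc_sq⟩).toRingHom

lemma φ_apply (x : Ok) : φ x = x.re + x.im * θc := by
  simp [φ, QuadraticAlgebra.lift]

lemma φ_injective : Function.Injective φ := by
  rw [injective_iff_map_eq_zero]
  intro x hx
  rw [φ_apply] at hx
  have h1 := congrArg Complex.im hx
  have h2 := congrArg Complex.re hx
  simp [θc] at h1 h2
  ext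
  · simpa [h1] using h2
  · simpa using h1

instance : IsDomain Ok := φ_injective.isDomain φ

instance : IsNoetherianRing Ok := IsNoetherianRing.of_finite ℤ Ok

/-- The field with four elements, as `𝔽₂[ω]` with `ω ^ 2 = ω + 1`. -/
abbrev F4 := QuadraticAlgebra (ZMod 2) 1 1

instance : Fact (∀ r : ZMod 2, r ^ 2 ≠ 1 + 1 * r) := ⟨by decide⟩

/-- Reduction modulo `2`. -/
def κ : Ok →+* F4 where
  toFun x := ⟨x.re, x.im⟩
  map_zero' := by ext <;> simp
  map_one' := by ext <;> simp [QuadraticAlgebra.re_one, QuadraticAlgebra.im_one]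
  map_add' x y := by ext <;> simp
  map_mul' x y := by
    have h3 : (3 : ZMod 2) = 1 := by decide
    ext <;> simp [h3]

/-- Reduction modulo `θ`, which takes the real coordinate `a` of `a + b θ` modulo `3`. -/
def κ3 : Ok →+* ZMod 3 where
  toFun x := x.re
  map_zero' := by simp
  map_one' := by simp [QuadraticAlgebra.re_one]
  map_add' x y := by simp
  map_mul' x y := by
    simp
    left; left; decide

lemma κ_eq_zero (x : Ok) : κ x = 0 ↔ 2 ∣ x := by
  constructor
  · intro h
    have h1 := congrArg QuadraticAlgebra.re h
    have h2 := congrArg QuadraticAlgebra.im h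
    simp [κ] at h1 h2
    obtain ⟨a, ha⟩ := (ZMod.intCast_zmod_eq_zero_iff_dvd _ 2).1 h1
    obtain ⟨b, hb⟩ := (ZMod.intCast_zmod_eq_zero_iff_dvd _ 2).1 h2
    refine ⟨⟨a, b⟩, ?_⟩
    ext <;> simp [ha, hb, QuadraticAlgebra.re_ofNat, QuadraticAlgebra.im_ofNat]
  · rintro ⟨y, rfl⟩
    have : κ 2 = 0 := by ext <;> simp [κ] <;> decide
    rw [map_mul, this, zero_mul]

/-- The generator `(1 + √-11) / 2`, of norm `3`. -/
def θ : Ok := ⟨0, 1⟩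

lemma κ3_eq_zero (x : Ok) : κ3 x = 0 ↔ θ ∣ x := by
  constructor
  · intro h
    obtain ⟨a, ha⟩ := (ZMod.intCast_zmod_eq_zero_iff_dvd _ 3).1 (show ((x.re : ℤ) : ZMod 3) = 0 from h)
    refine ⟨⟨x.im + a, - a⟩, ?_⟩
    ext <;> simp [θ, ha]
  · rintro ⟨y, rfl⟩
    have : κ3 θ = 0 := by simp [κ3, θ]
    rw [map_mul, this, zero_mul]

lemma not_isUnit_two : ¬ IsUnit (2 : Ok) := by
  intro h
  have := h.map κ
  rw [(κ_eq_zero 2).2 dvd_rfl] at this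
  exact not_isUnit_zero this

lemma not_isUnit_θ : ¬ IsUnit θ := by
  intro h
  have := h.map κ3
  rw [(κ3_eq_zero θ).2 dvd_rfl] at this
  exact not_isUnit_zero this

/-- Every element of `ℚ(√-11)` is a fraction `α / β` of elements of `ℤ[θ]`. -/
lemma exists_rep (z : ℂ) (h : ∃ a b : ℚ, z = (a : ℂ) + (b : ℂ) * (Real.sqrt 11 : ℂ) * Complex.I) :
    ∃ α β : Ok, β ≠ 0 ∧ φ β * z = φ α := by
  obtain ⟨a, b, rfl⟩ := h
  refine ⟨⟨a.num * b.den - b.num * a.den, 2 * b.num * a.den⟩, ((a.den * b.den : ℕ) : Ok), ?_, ?_⟩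
  · exact Nat.cast_ne_zero.2 (mul_ne_zero a.den_nz b.den_nz)
  · rw [map_natCast, φ_apply, θc]
    have ha : (a : ℂ) * a.den = a.num := by exact_mod_cast Rat.mul_den_eq_num a
    have hb : (b : ℂ) * b.den = b.num := by exact_mod_cast Rat.mul_den_eq_num b
    push_cast
    rw [← ha, ← hb]
    ring

end Ok

/-! ### Morgan-Voyce polynomials in characteristic two -/

section mv

/-- The pair `(b_n, B_n)` of Morgan-Voyce polynomials. -/
noncomputable def mv (K : Type*) [CommRing K] : ℕ → K[X] × K[X]
  | 0 => (1, 0)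
  | n + 1 => ((mv K n).1 + X * ((mv K n).1 + (mv K n).2), (mv K n).1 + (mv K n).2)

variable (K : Type*) [CommRing K]

lemma mv_coeff (n : ℕ) : ∀ k, (mv K n).1.coeff k = (n + k).choose (2 * k) ∧
    (mv K n).2.coeff k = (n + k).choose (2 * k + 1) := by
  induction n with
  | zero =>
    intro k
    rcases k with _ | k
    · simp [mv]
    · rw [Nat.choose_eq_zero_of_lt (by omega), Nat.choose_eq_zero_of_lt (by omega)]
      simp [mv, coeff_one]
  | succ n ih =>
    have hB (k : ℕ) : (mv K (n + 1)).2.coeff k = (n + 1 + k).choose (2 * k + 1) := by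
      rw [mv, coeff_add, (ih k).1, (ih k).2, show n + 1 + k = n + k + 1 by ring,
        Nat.choose_succ_succ]
      push_cast; ring
    intro k
    refine ⟨?_, hB k⟩
    have : (mv K (n + 1)).1 = (mv K n).1 + X * (mv K (n + 1)).2 := rfl
    rw [this, coeff_add, (ih k).1]
    rcases k with _ | k
    · simp
    · rw [coeff_X_mul, hB, show n + 1 + (k + 1) = (n + (k + 1)) + 1 by ring,
        show 2 * (k + 1) = (2 * k + 1) + 1 by ring, Nat.choose_succ_succ,
        show n + 1 + k = n + (k + 1) by ring]
      push_cast; ring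

lemma mv_identity (n : ℕ) :
    (mv K n).1 ^ 2 - X * (mv K n).1 * (mv K n).2 - X * (mv K n).2 ^ 2 = 1 := by
  induction n with
  | zero => simp [mv]
  | succ n ih =>
    rw [mv]
    linear_combination ih

variable [CharP K 2]

lemma mv_double (m : ℕ) :
    (mv K (2 * m)).1 = (mv K m).1 ^ 2 + X * (mv K m).2 ^ 2 ∧
    (mv K (2 * m)).2 = X * (mv K m).2 ^ 2 := by
  have h2 : (2 : K[X]) = 0 := CharTwo.two_eq_zero
  induction m with
  | zero => simp [mv]
  | succ m ih =>
    rw [show 2 * (m + 1) = 2 * m + 1 + 1 by ring, mv, mv, ih.1, ih.2, mv]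
    generalize (mv K m).1 = b
    generalize (mv K m).2 = B
    dsimp only
    constructor
    · linear_combination (X ^ 3 * B ^ 2 + 2 * X ^ 2 * B ^ 2 - X ^ 2 * b * B - 2 * X * b * B) * h2
    · linear_combination (b ^ 2 + X * B ^ 2 + X ^ 2 * B ^ 2 - X * b * B) * h2

lemma mv_double_add_one (m : ℕ) :
    (mv K (2 * m + 1)).1 = (mv K m).1 ^ 2 + X * (mv K (m + 1)).2 ^ 2 ∧
    (mv K (2 * m + 1)).2 = (mv K m).1 ^ 2 := by
  have h2 : (2 : K[X]) = 0 := CharTwo.two_eq_zero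
  have ih := mv_double K m
  rw [mv, ih.1, ih.2, mv]
  generalize (mv K m).1 = b
  generalize (mv K m).2 = B
  dsimp only
  constructor
  · linear_combination (X ^ 2 * B ^ 2 - X * b * B) * h2
  · linear_combination (X * B ^ 2) * h2

lemma derivative_sq_eq_zero (p : K[X]) : derivative (p ^ 2) = 0 := by
  have h2 : (2 : K[X]) = 0 := CharTwo.two_eq_zero
  rw [pow_two, derivative_mul]
  linear_combination (derivative p * p) * h2

end mv

section mvField
variable {K : Type*} [Field K]

lemma mv_not_common_root (m : ℕ) (z : K) (h1 : (mv K m).1.eval z = 0) (h2 : (mv K m).2.eval z = 0) :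
    False := by
  have := congrArg (eval z) (mv_identity K m)
  simp [h1, h2] at this

variable [CharP K 2]

/-- For `A ≠ 0` the polynomial `A b_N + B X B_N` has no multiple root in characteristic two. -/
lemma mv_no_double_root (N : ℕ) (A B z : K) (hA : A ≠ 0)
    (h0 : (C A * (mv K N).1 + C B * X * (mv K N).2).eval z = 0)
    (h1 : (derivative (C A * (mv K N).1 + C B * X * (mv K N).2)).eval z = 0) : False := by
  have t2 : (2 : K) = 0 := CharTwo.two_eq_zero
  rcases Nat.even_or_odd' N with ⟨m, rfl | rfl⟩
  · obtain ⟨e1, e2⟩ := mv_double K m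
    rw [e1, e2] at h0 h1
    have e3 : C A * ((mv K m).1 ^ 2 + X * (mv K m).2 ^ 2) + C B * X * (X * (mv K m).2 ^ 2) =
      C A * ((mv K m).1 ^ 2 + X * (mv K m).2 ^ 2) + C B * (X * (mv K m).2) ^ 2 := by ring
    rw [e3] at h1
    simp only [derivative_add, derivative_mul, derivative_sq_eq_zero, derivative_X] at h1
    simp [hA] at h1
    simp [hA, h1] at h0
    exact mv_not_common_root m z h0 h1
  · obtain ⟨e1, e2⟩ := mv_double_add_one K m
    rw [e1, e2] at h0 h1
    rw [show (mv K (m + 1)).2 = (mv K m).1 + (mv K m).2 from rfl] at h0 h1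
    simp only [mul_assoc (C B), derivative_add, derivative_mul, derivative_sq_eq_zero, derivative_X] at h1
    simp at h0 h1
    have hb : A * ((mv K m).1.eval z) ^ 2 = 0 := by linear_combination h0 - z * h1
    simp [hA] at hb
    simp [hA, hb] at h1
    exact mv_not_common_root m z hb h1

end mvField

namespace Ok

noncomputable instance : Fintype F4 := Fintype.ofEquiv _ (QuadraticAlgebra.equivProd (R := ZMod 2) 1 1).symm

lemma card_F4 : Fintype.card F4 = 4 := by
  rw [Fintype.ofEquiv_card]; simp

instance : CharP F4 2 := CharTwo.of_one_ne_zero_of_two_eq_zero one_ne_zero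
  (by ext <;> simp [QuadraticAlgebra.re_ofNat, QuadraticAlgebra.im_ofNat]; decide)

/-- The polynomial `A b_N + B X B_N`, the general shape of the nodal polynomial modulo `2`. -/
noncomputable def Pmv (N : ℕ) (A B : F4) : F4[X] := C A * (mv F4 N).1 + C B * X * (mv F4 N).2

lemma Pmv_coeff_zero (N : ℕ) (A B : F4) : (Pmv N A B).coeff 0 = A := by
  simp [Pmv, mul_assoc, mv_coeff]

lemma Pmv_coeff_succ (N : ℕ) (A B : F4) (k : ℕ) : (Pmv N A B).coeff (k + 1) =
    A * (N + (k + 1)).choose (2 * (k + 1)) + B * (N + k).choose (2 * k + 1) := by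
  simp [Pmv, mul_assoc, mv_coeff]

lemma Pmv_one_zero (N : ℕ) : Pmv N 1 0 = (mv F4 N).1 := by simp [Pmv]

/-- If `A ≠ 0` and `A b_N + B X B_N` splits over `𝔽₄`, its roots are distinct and nonzero, so there are
at most three of them, and `1` is a root if there are three. -/
lemma Pmv_splits_bound (N : ℕ) (A B : F4) (hA : A ≠ 0) (hs : (Pmv N A B).Splits) :
    (Pmv N A B).natDegree ≤ 3 ∧ ((Pmv N A B).natDegree = 3 → (Pmv N A B).eval 1 = 0) := by
  classical
  have hne : Pmv N A B ≠ 0 := fun h => hA (by rw [← Pmv_coeff_zero N A B, h, coeff_zero])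
  have hnd : (Pmv N A B).roots.Nodup := by
    rw [Multiset.nodup_iff_count_le_one]
    intro z
    rw [count_roots]
    by_contra! hlt
    have := (one_lt_rootMultiplicity_iff_isRoot hne).1 hlt
    exact mv_no_double_root N A B z hA this.1 this.2
  have hsub : (Pmv N A B).roots.toFinset ⊆ Finset.univ.erase 0 := by
    intro z hz
    refine Finset.mem_erase.2 ⟨?_, Finset.mem_univ _⟩
    rintro rfl
    rw [Multiset.mem_toFinset, mem_roots hne, IsRoot, ← coeff_zero_eq_eval_zero, Pmv_coeff_zero] at hz
    exact hA hz
  have hcard : (Finset.univ.erase (0 : F4)).card = 3 := by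
    rw [Finset.card_erase_of_mem (Finset.mem_univ _), Finset.card_univ, card_F4]
  have hdeg : (Pmv N A B).natDegree = (Pmv N A B).roots.toFinset.card := by
    rw [hs.natDegree_eq_card_roots, Multiset.toFinset_card_of_nodup hnd]
  refine ⟨by rw [hdeg, ← hcard]; exact Finset.card_le_card hsub, fun h => ?_⟩
  have heq := Finset.eq_of_subset_of_card_le hsub (by rw [hcard, ← hdeg, h])
  have : (1 : F4) ∈ (Pmv N A B).roots.toFinset := by
    rw [heq]; exact Finset.mem_erase.2 ⟨one_ne_zero, Finset.mem_univ _⟩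
  rw [Multiset.mem_toFinset, mem_roots hne] at this
  exact this

lemma Pmv_splits_imp (N : ℕ) (hN : 4 ≤ N) (A B : F4) (hs : (Pmv N A B).Splits) : A = 0 := by
  have t2 : (2 : F4) = 0 := CharTwo.two_eq_zero
  by_contra hA
  obtain ⟨h1, h2⟩ := Pmv_splits_bound N A B hA hs
  obtain ⟨n, rfl⟩ : ∃ n, N = n + 2 := ⟨N - 2, by omega⟩
  have c1 : (Pmv (n + 2) A B).coeff (n + 1) = A := by
    rw [Pmv_coeff_succ, show n + 2 + (n + 1) = 2 * (n + 1) + 1 by ring, Nat.choose_succ_self_right,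
      show n + 2 + n = 2 * n + 1 + 1 by ring, Nat.choose_succ_self_right]
    push_cast
    linear_combination (A * (n + 1) + B * (n + 1)) * t2
  have h3 : n + 1 ≤ (Pmv (n + 2) A B).natDegree := le_natDegree_of_ne_zero (by rwa [c1])
  obtain rfl : n = 2 := by omega
  have c2 : (Pmv (2 + 2) A B).coeff (3 + 1) = 0 := coeff_eq_zero_of_natDegree_lt (by omega)
  rw [Pmv_coeff_succ] at c2
  simp at c2
  have := h2 (by omega)
  simp [Pmv, mv] at this
  apply hA
  linear_combination c2 - this + (17 * A + 10 * B) * t2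

lemma mv_splits_imp (m : ℕ) (hs : (mv F4 m).1.Splits) : m ≤ 2 := by
  rw [← Pmv_one_zero] at hs
  obtain ⟨h1, h2⟩ := Pmv_splits_bound m 1 0 one_ne_zero hs
  rcases m with _ | m
  · omega
  have c1 : (Pmv (m + 1) 1 0).coeff (m + 1) = 1 := by
    rw [Pmv_coeff_succ, ← two_mul]; simp
  have h3 : m + 1 ≤ (Pmv (m + 1) 1 0).natDegree := le_natDegree_of_ne_zero (by rw [c1]; exact one_ne_zero)
  by_contra! hm
  obtain rfl : m = 2 := by omega
  have := h2 (by omega)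
  have t2 : (2 : F4) = 0 := CharTwo.two_eq_zero
  simp [Pmv, mv] at this
  exact one_ne_zero (α := F4) (by linear_combination this - 6 * t2)

lemma Pmv_zero_odd (m : ℕ) (B : F4) (hB : B ≠ 0) (hs : (Pmv (2 * m + 1) 0 B).Splits) : m ≤ 2 := by
  apply mv_splits_imp
  have e : Pmv (2 * m + 1) 0 B = (mv F4 m).1 * (C B * X * (mv F4 m).1) := by
    rw [Pmv, (mv_double_add_one F4 m).2]; simp; ring
  have h0 : (mv F4 m).1 ≠ 0 := fun h => by simpa [h] using (mv_coeff F4 m 0).1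
  refine hs.of_dvd ?_ (e ▸ dvd_mul_right _ _)
  rw [e]
  simp [h0, hB]

lemma Pmv_zero_even (j : ℕ) (B : F4) : Pmv (4 * j + 2) 0 B = C B * X ^ 2 * (mv F4 j).1 ^ 4 := by
  rw [Pmv, show 4 * j + 2 = 2 * (2 * j + 1) by ring, (mv_double F4 _).2, (mv_double_add_one F4 j).2]
  simp; ring

lemma Pmv_zero_even_le (j : ℕ) (B : F4) (hB : B ≠ 0) (hs : (Pmv (4 * j + 2) 0 B).Splits) : j ≤ 2 := by
  apply mv_splits_imp
  have e := Pmv_zero_even j B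
  have h0 : (mv F4 j).1 ≠ 0 := fun h => by simpa [h] using (mv_coeff F4 j 0).1
  refine hs.of_dvd ?_ (e ▸ Dvd.dvd.mul_left (dvd_pow_self _ four_ne_zero) _)
  rw [e]
  simp [h0, hB]

end Ok

/-! ### The prime `2` -/

namespace Ok

/-- The coefficients of `F` satisfy the linear relations of `orth_relation` over `ℤ[θ]`. -/
def Rel (N : ℕ) (F : Ok[X]) : Prop := ∀ k ≤ N, (oddFac N : Ok) * F.coeff k =
  oddFac N * F.coeff 0 * bb N k + (F.coeff N - oddFac N * F.coeff 0) * cc N k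

lemma odd_oddFac (N : ℕ) : Odd (oddFac N) := by
  induction N with
  | zero => simp [oddFac]
  | succ n ih => exact (odd_two_mul_add_one n).mul ih

lemma F4_cast_odd {n : ℕ} (hn : Odd n) : (n : F4) = 1 := by
  obtain ⟨m, rfl⟩ := hn
  have t2 : (2 : F4) = 0 := CharTwo.two_eq_zero
  push_cast; rw [t2]; ring

lemma map_κ_of_rel {N : ℕ} {F : Ok[X]} (hF : Rel N F) (hdeg : F.natDegree ≤ N) :
    F.map κ = Pmv N (κ (F.coeff 0)) (κ (F.coeff N - oddFac N * F.coeff 0)) := by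
  ext1 k
  rw [coeff_map]
  rcases k with _ | k
  · rw [Pmv_coeff_zero]
  rcases le_or_gt (k + 1) N with hk | hk
  · have h := congrArg κ (hF _ hk)
    simp only [map_mul, map_add, map_natCast, F4_cast_odd (odd_oddFac N), one_mul] at h
    rw [h, Pmv_coeff_succ, bb, cc, if_neg (Nat.succ_ne_zero k)]
    push_cast
    rw [F4_cast_odd (odd_oddFac _), one_mul, one_mul, show N + (k + 1) - 1 = N + k by omega,
      show 2 * (k + 1) - 1 = 2 * k + 1 by omega]
  · rw [coeff_eq_zero_of_natDegree_lt (hdeg.trans_lt hk), Pmv_coeff_succ,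
      Nat.choose_eq_zero_of_lt (by omega), Nat.choose_eq_zero_of_lt (by omega)]
    simp

lemma splits_lin {K ι : Type*} [Field K] (s : Finset ι) (α β : ι → K) : (lin s α β).Splits := by
  refine Splits.prod fun i _ => Splits.of_natDegree_le_one ?_
  refine (natDegree_sub_le _ _).trans ?_
  simpa using (natDegree_C_mul_le (β i) X).trans natDegree_X_le

lemma taylor_coeff_two (N : ℕ) (F : Ok[X]) (hdeg : F.natDegree ≤ N) (τ : Ok) :
    (taylor τ F).coeff 2 =
      ∑ i ∈ Finset.range (N + 1), (i.choose 2 : Ok) * F.coeff i * τ ^ (i - 2) := by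
  rw [taylor_coeff, hasseDeriv_apply, sum_over_range' _ _ (N + 1) (by omega), eval_finsetSum]
  · simp
  · simp

lemma two_ne_zero_Ok : (2 : Ok) ≠ 0 := fun h => by
  have := congrArg QuadraticAlgebra.re h
  simp [QuadraticAlgebra.re_ofNat] at this

lemma natDegree_lin_univ_le {N : ℕ} (α β : Fin N → Ok) : (lin Finset.univ α β).natDegree ≤ N := by
  simpa using natDegree_lin_le Finset.univ α β

/-- A primitive product of linear forms does not vanish modulo `2`, so `B ≠ 0` when `A = 0`. -/
lemma two_case_B {N : ℕ} (α β : Fin N → Ok) (hprim : ∀ i ∈ Finset.univ, ¬ (2 ∣ α i ∧ 2 ∣ β i))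
    (hrel : Rel N (lin Finset.univ α β)) (hA : κ ((lin Finset.univ α β).coeff 0) = 0) :
    κ ((lin Finset.univ α β).coeff N - oddFac N * (lin Finset.univ α β).coeff 0) ≠ 0 := by
  classical
  intro hB
  have h := map_κ_of_rel hrel (natDegree_lin_univ_le α β)
  rw [hA, hB] at h
  have := count_of_dvd_coeff 2 κ κ_eq_zero Finset.univ α β hprim (N + 1) fun k _ => by
    rw [← κ_eq_zero, ← coeff_map, h]; simp [Pmv]
  have h2 := this.trans (Finset.card_le_univ _)
  simp at h2

/-- Suppose that the reduction modulo `2` has a root of multiplicity at least four at `κ τ`. Then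
four of the `α i - β i τ` are even, so the quadratic Taylor coefficient of `F` at `τ` is divisible by
`4`. By the relations and `4 ∣ F_0`, so is `B'` times the sum in `hS`, where `B'` lifts `B`; as this
sum is `2 u` with `u` odd, `B'` is even. -/
lemma two_case_taylor {N : ℕ} (α β : Fin N → Ok) (hprim : ∀ i ∈ Finset.univ, ¬ (2 ∣ α i ∧ 2 ∣ β i))
    (hrel : Rel N (lin Finset.univ α β)) (h0 : 2 ^ 2 ∣ (lin Finset.univ α β).coeff 0)
    (τ u : Ok) (hu : κ u ≠ 0)
    (hτ : (X - C (κ τ)) ^ 4 ∣ (lin Finset.univ α β).map κ)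
    (hS : ∑ i ∈ Finset.range (N + 1), (i.choose 2 : Ok) * cc N i * τ ^ (i - 2) = 2 * u) :
    κ ((lin Finset.univ α β).coeff N - oddFac N * (lin Finset.univ α β).coeff 0) = 0 := by
  set F := lin Finset.univ α β with hF
  have hprim' : ∀ i ∈ Finset.univ, ¬ (2 ∣ α i - β i * τ ∧ 2 ∣ β i) := fun i hi h =>
    hprim i hi ⟨by simpa using dvd_add h.1 (h.2.mul_right τ), h.2⟩
  have hG : ∀ k < 4, 2 ∣ (lin Finset.univ (fun i => α i - β i * τ) β).coeff k := by
    intro k hk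
    rw [← κ_eq_zero, ← coeff_map, ← lin_taylor, ← hF, map_taylor]
    obtain ⟨Q, hQ⟩ := hτ
    rw [hQ, taylor_apply, mul_comp, pow_comp, sub_comp, X_comp, C_comp, add_sub_cancel_right,
      coeff_X_pow_mul', if_neg (by omega)]
  have h4 := pow_dvd_of_dvd_coeff 2 κ κ_eq_zero _ _ β hprim' 4 hG 2 2 le_rfl
  rw [← lin_taylor, ← hF, taylor_coeff_two N F (natDegree_lin_univ_le α β)] at h4
  have e : (oddFac N : Ok) * ∑ i ∈ Finset.range (N + 1), (i.choose 2 : Ok) * F.coeff i * τ ^ (i - 2)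
      = F.coeff 0 * (oddFac N * ∑ i ∈ Finset.range (N + 1), (i.choose 2 : Ok) * bb N i * τ ^ (i - 2))
        + (F.coeff N - oddFac N * F.coeff 0) * (2 * u) := by
    rw [← hS]
    simp only [Finset.mul_sum]
    rw [← Finset.sum_add_distrib]
    refine Finset.sum_congr rfl fun i hi => ?_
    have := hrel i (by simpa [Nat.lt_succ_iff] using hi)
    linear_combination (i.choose 2 : Ok) * τ ^ (i - 2) * this
  have h5 := (dvd_add_right (h0.mul_right _)).1 (e ▸ h4.mul_left (oddFac N : Ok))
  have h2 : (2 : Ok) ≠ 0 := two_ne_zero_Ok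
  rw [show (F.coeff N - oddFac N * F.coeff 0) * (2 * u) =
    2 * ((F.coeff N - oddFac N * F.coeff 0) * u) by ring, pow_two] at h5
  have h6 := (κ_eq_zero _).2 ((mul_dvd_mul_iff_left h2).1 h5)
  rw [map_mul] at h6
  exact (mul_eq_zero.1 h6).resolve_right hu

/-- The sum in `two_case_taylor` for `N = 6`, `τ = 1`. -/
lemma sum_six : ∑ i ∈ Finset.range (6 + 1), (i.choose 2 : Ok) * cc 6 i * 1 ^ (i - 2) =
    2 * (137865 : Ok) := by
  simp [Finset.sum_range_succ, cc, oddFac, Nat.choose]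
  norm_num

/-- The sum in `two_case_taylor` for `N = 10`, `τ = θ`. -/
lemma sum_ten : ∑ i ∈ Finset.range (10 + 1), (i.choose 2 : Ok) * cc 10 i * θ ^ (i - 2) =
    2 * (⟨-1109488687560, -308460619665⟩ : Ok) := by
  have h : θ * θ = θ - 3 := by
    ext <;> simp [θ, QuadraticAlgebra.re_ofNat, QuadraticAlgebra.im_ofNat]
  have e : (⟨-1109488687560, -308460619665⟩ : Ok) = -1109488687560 - 308460619665 * θ := by
    ext <;> simp [θ, QuadraticAlgebra.re_ofNat, QuadraticAlgebra.im_ofNat]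
  rw [e]
  simp [Finset.sum_range_succ, cc, oddFac, Nat.choose]
  -- The multiplier is the quotient of the Taylor sum by `X ^ 2 - X + 3`, evaluated at `θ`.
  linear_combination (739659125205 + 452193466725 * θ - 95821525800 * θ ^ 2 - 182665357875 * θ ^ 3
    - 28876998150 * θ ^ 4 + 51792515775 * θ ^ 5 + 29462808375 * θ ^ 6) * h

/-- The case `N = 4j + 2`: the reduction is `B X ^ 2 b_j ^ 4`, which splits over `𝔽₄` only for
`j ≤ 2`, and `b_1 = X + 1`, `b_2 = X ^ 2 + X + 1` vanish at `1` and at `θ` respectively. -/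
lemma two_case_two_mod_four (j : ℕ) (hj : 1 ≤ j) (α β : Fin (4 * j + 2) → Ok)
    (hprim : ∀ i ∈ Finset.univ, ¬ (2 ∣ α i ∧ 2 ∣ β i))
    (hrel : Rel (4 * j + 2) (lin Finset.univ α β)) : False := by
  have hmap := map_κ_of_rel hrel (natDegree_lin_univ_le α β)
  have hs : ((lin Finset.univ α β).map κ).Splits := by rw [lin_map]; exact splits_lin _ _ _
  have hA : κ ((lin Finset.univ α β).coeff 0) = 0 := Pmv_splits_imp _ (by omega) _ _ (hmap ▸ hs)
  have hB := two_case_B α β hprim hrel hA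
  rw [hA] at hmap
  rw [hmap] at hs
  have hj2 := Pmv_zero_even_le j _ hB hs
  rw [Pmv_zero_even] at hmap
  have h0 : 2 ^ 2 ∣ (lin Finset.univ α β).coeff 0 := by
    refine pow_dvd_of_dvd_coeff 2 κ κ_eq_zero _ α β hprim 2 (fun k hk => ?_) 0 2 le_rfl
    rw [← κ_eq_zero, ← coeff_map, hmap, mul_comm (C _), mul_assoc, coeff_X_pow_mul',
      if_neg (by omega)]
  have t2 : (2 : F4) = 0 := CharTwo.two_eq_zero
  obtain rfl | rfl : j = 1 ∨ j = 2 := by omega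
  · refine hB (two_case_taylor α β hprim hrel h0 1 137865 ?_ ?_ sum_six)
    · rw [Ne, κ_eq_zero]
      rintro ⟨y, hy⟩
      have := congrArg QuadraticAlgebra.re hy
      simp [QuadraticAlgebra.re_ofNat, QuadraticAlgebra.im_ofNat] at this
      omega
    · rw [hmap]
      refine Dvd.dvd.mul_left (pow_dvd_pow_of_dvd ?_ _) _
      rw [dvd_iff_isRoot, map_one]
      simp [mv]
      linear_combination t2
  · refine hB (two_case_taylor α β hprim hrel h0 θ _ ?_ ?_ sum_ten)
    · rw [Ne, κ_eq_zero]
      rintro ⟨y, hy⟩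
      have := congrArg QuadraticAlgebra.im hy
      simp [QuadraticAlgebra.re_ofNat, QuadraticAlgebra.im_ofNat] at this
      omega
    · rw [hmap]
      refine Dvd.dvd.mul_left (pow_dvd_pow_of_dvd ?_ _) _
      have h : κ θ * κ θ = κ θ + 1 := by
        ext <;> simp [κ, θ, QuadraticAlgebra.re_one, QuadraticAlgebra.im_one]
      rw [dvd_iff_isRoot]
      simp [mv]
      linear_combination h + (1 + 2 * κ θ) * t2

/-- For `k = 2 ^ j t` with `t` odd, `(n + k) * choose (n + k - 1) (2k - 1) = 2k * choose (n + k) (2k)`,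
and `2 ^ j` exactly divides `n + k`. -/
lemma cc_even (n a s k : ℕ) (hN : n = 2 ^ a * s) (hk : 0 < k) (hk2 : k < 2 ^ a) : 2 ∣ cc n k := by
  obtain ⟨j, t, ht, rfl⟩ := Nat.exists_eq_two_pow_mul_odd hk.ne'
  have hja : j < a := by
    refine (Nat.pow_lt_pow_iff_right (a := 2) (by norm_num)).1 ?_
    exact (Nat.le_mul_of_pos_right _ ht.pos).trans_lt hk2
  obtain ⟨d, rfl⟩ := Nat.exists_eq_add_of_lt hja
  rw [cc, if_neg hk.ne']
  refine Dvd.dvd.mul_left ?_ _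
  have := Nat.add_one_mul_choose_eq (n + 2 ^ j * t - 1) (2 * (2 ^ j * t) - 1)
  rw [Nat.sub_add_cancel (by omega), Nat.sub_add_cancel (by omega)] at this
  have hodd : Odd (2 * (2 ^ d * s) + t) := by
    exact (even_two_mul _).add_odd ht
  have h2 : (2 * (2 ^ d * s) + t) * (n + 2 ^ j * t - 1).choose (2 * (2 ^ j * t) - 1) =
      2 * (t * (n + 2 ^ j * t).choose (2 * (2 ^ j * t))) := by
    refine Nat.eq_of_mul_eq_mul_left (show 0 < 2 ^ j by positivity) ?_
    rw [show n + 2 ^ j * t = 2 ^ j * (2 * (2 ^ d * s) + t) by rw [hN]; ring] at this ⊢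
    linear_combination this
  exact (Nat.Coprime.dvd_mul_left (Nat.coprime_two_left.2 hodd)).1 ⟨_, h2⟩

/-- The identity `(n + k) * choose (n + k - 1) (2k - 1) = 2k * choose (n + k) (2k)` for
`n = 2 ^ (a + 1) s` and `k = 2 ^ a`, divided by `2 ^ a`. -/
lemma cc_mid (a s : ℕ) : 
    (2 * s + 1) * (2 ^ (a + 1) * s + 2 ^ a - 1).choose (2 * 2 ^ a - 1) =
      2 * (2 ^ (a + 1) * s + 2 ^ a).choose (2 * 2 ^ a) := by
  have := Nat.add_one_mul_choose_eq (2 ^ (a + 1) * s + 2 ^ a - 1) (2 * 2 ^ a - 1)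
  have h1 : 0 < 2 ^ a := by positivity
  rw [Nat.sub_add_cancel (by omega),
    Nat.sub_add_cancel (by omega)] at this
  refine Nat.eq_of_mul_eq_mul_left h1 ?_
  rw [pow_succ] at this ⊢
  linear_combination this

/-- By Lucas' theorem this binomial coefficient is congruent to `choose (2s + 1) 2 = s (2s + 1)`. -/
lemma choose_mid_odd (a s : ℕ) (hs : Odd s) :
    Odd ((2 ^ (a + 1) * s + 2 ^ a).choose (2 * 2 ^ a)) := by
  have hm : ∀ a, (2 ^ a * (2 * s + 1)).choose (2 ^ a * 2) ≡ (2 * s + 1).choose 2 [MOD 2] := by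
    intro a
    induction a with
    | zero => simp; rfl
    | succ a ih =>
      have : Fact (Nat.Prime 2) := ⟨Nat.prime_two⟩
      refine Nat.ModEq.trans ?_ ih
      have := Choose.choose_modEq_choose_mod_mul_choose_div_nat (p := 2)
        (n := 2 ^ (a + 1) * (2 * s + 1)) (k := 2 ^ (a + 1) * 2)
      rw [show 2 ^ (a + 1) * 2 = 2 * (2 ^ a * 2) by ring,
        show 2 ^ (a + 1) * (2 * s + 1) = 2 * (2 ^ a * (2 * s + 1)) by ring] at this ⊢
      simpa only [Nat.mul_mod_right, Nat.choose_self, one_mul, Nat.mul_div_cancel_left _ two_pos] using this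
  rw [show 2 ^ (a + 1) * s + 2 ^ a = 2 ^ a * (2 * s + 1) by ring, mul_comm 2 (2 ^ a), Nat.odd_iff, hm a,
    ← Nat.odd_iff, Nat.choose_two_right, Nat.add_sub_cancel, mul_comm 2 s, ← mul_assoc,
    Nat.mul_div_cancel _ two_pos]
  exact Odd.mul ⟨s, by ring⟩ hs

/-- The case `N = 2 ^ a s` with `s` odd and `a ≥ 2`: the coefficients of index below `2 ^ a` are even,
so `4 ∣ F_k` for `k = 2 ^ (a - 1)`, whereas the relation at `k` shows that `F_k` is exactly divisible
by `2`. -/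
lemma two_case_zero_mod_four {N : ℕ} (hN : 1 ≤ N) (h4 : 4 ∣ N) (α β : Fin N → Ok)
    (hprim : ∀ i ∈ Finset.univ, ¬ (2 ∣ α i ∧ 2 ∣ β i))
    (hrel : Rel N (lin Finset.univ α β)) : False := by
  obtain ⟨a, s, hs, hNs⟩ := Nat.exists_eq_two_pow_mul_odd (show N ≠ 0 by omega)
  obtain ⟨b, rfl⟩ : ∃ b, a = b + 2 := by
    refine ⟨a - 2, ?_⟩
    have : 2 ≤ a := by
      by_contra! h
      have := Nat.odd_iff.1 hs
      interval_cases a <;> omega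
    omega
  have hmap := map_κ_of_rel hrel (natDegree_lin_univ_le α β)
  have hsp : ((lin Finset.univ α β).map κ).Splits := by rw [lin_map]; exact splits_lin _ _ _
  have hA : κ ((lin Finset.univ α β).coeff 0) = 0 := Pmv_splits_imp N (by omega) _ _ (hmap ▸ hsp)
  have hB := two_case_B α β hprim hrel hA
  have hb : 1 ≤ 2 ^ b := Nat.one_le_two_pow
  have hsmall : ∀ k < 2 ^ (b + 2), 2 ∣ (lin Finset.univ α β).coeff k := by
    intro k hk
    rw [← κ_eq_zero]
    rcases Nat.eq_zero_or_pos k with rfl | hk0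
    · exact hA
    · have h := congrArg κ (hrel k (hk.le.trans (hNs ▸ Nat.le_mul_of_pos_right _ hs.pos)))
      obtain ⟨c, hc⟩ := cc_even N _ s k hNs hk0 hk
      have t2 : (2 : F4) = 0 := CharTwo.two_eq_zero
      rw [hc] at h
      simp only [map_mul, map_add, map_natCast, F4_cast_odd (odd_oddFac N), hA, one_mul] at h
      rw [h]
      push_cast
      rw [t2]; ring
  have hpow : 2 ^ (b + 2) = 4 * 2 ^ b := by ring
  have h0 : 2 ^ 2 ∣ (lin Finset.univ α β).coeff 0 :=
    pow_dvd_of_dvd_coeff 2 κ κ_eq_zero _ α β hprim _ hsmall 0 2 (by omega)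
  have h1 : 2 ^ 2 ∣ (lin Finset.univ α β).coeff (2 ^ (b + 1)) :=
    pow_dvd_of_dvd_coeff 2 κ κ_eq_zero _ α β hprim _ hsmall _ 2 (by rw [pow_succ]; omega)
  have hle : 2 ^ (b + 1) ≤ N := by
    rw [hNs]
    exact (Nat.pow_le_pow_right two_pos (by omega)).trans (Nat.le_mul_of_pos_right _ hs.pos)
  have hr := hrel _ hle
  have h2 := (dvd_add_right ((h0.mul_left (oddFac N : Ok)).mul_right
    (bb N (2 ^ (b + 1)) : Ok))).1 (hr ▸ h1.mul_left (oddFac N : Ok))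
  have h3 := cc_mid (b + 1) s
  rw [← hNs] at h3
  have hodd := choose_mid_odd (b + 1) s hs
  rw [← hNs] at hodd
  set M := (N + 2 ^ (b + 1)).choose (2 * 2 ^ (b + 1))
  have h4 : (2 * s + 1) * cc N (2 ^ (b + 1)) = 2 * (oddFac (2 ^ (b + 1)) * M) := by
    rw [cc, if_neg (by positivity)]
    linear_combination oddFac (2 ^ (b + 1)) * h3
  have h4' : ((2 * s + 1 : ℕ) : Ok) * cc N (2 ^ (b + 1)) = 2 * (oddFac (2 ^ (b + 1)) * M : ℕ) := by
    exact_mod_cast h4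
  have h5 := h2.mul_left ((2 * s + 1 : ℕ) : Ok)
  rw [mul_left_comm, h4', mul_left_comm, pow_two, mul_dvd_mul_iff_left two_ne_zero_Ok,
    ← κ_eq_zero, map_mul, map_natCast, F4_cast_odd ((odd_oddFac _).mul hodd), mul_one] at h5
  exact hB h5

lemma two_case {N : ℕ} (hN : 4 ≤ N) (h5 : N ≠ 5) (α β : Fin N → Ok)
    (hprim : ∀ i ∈ Finset.univ, ¬ (2 ∣ α i ∧ 2 ∣ β i))
    (hrel : Rel N (lin Finset.univ α β)) : False := by
  rcases Nat.even_or_odd' N with ⟨m, hm | rfl⟩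
  · rcases Nat.even_or_odd' m with ⟨j, rfl | rfl⟩
    · exact two_case_zero_mod_four (by omega) (by omega) α β hprim hrel
    · obtain rfl : N = 4 * j + 2 := by omega
      exact two_case_two_mod_four j (by omega) α β hprim hrel
  · have hmap := map_κ_of_rel hrel (natDegree_lin_univ_le α β)
    have hs : ((lin Finset.univ α β).map κ).Splits := by rw [lin_map]; exact splits_lin _ _ _
    have hA : κ ((lin Finset.univ α β).coeff 0) = 0 := Pmv_splits_imp _ hN _ _ (hmap ▸ hs)
    have hB := two_case_B α β hprim hrel hA
    rw [hmap, hA] at hs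
    have := Pmv_zero_odd m _ hB hs
    omega

end Ok

/-! ### The prime above `3` and conclusion -/

namespace Ok

instance : CharZero Ok := ⟨fun m n h => by simpa using congrArg φ h⟩

lemma three_eq : (3 : Ok) = θ * (1 - θ) := by
  ext <;> simp [θ, QuadraticAlgebra.re_ofNat, QuadraticAlgebra.im_ofNat, QuadraticAlgebra.re_one,
    QuadraticAlgebra.im_one]

lemma θ_ne_zero : θ ≠ 0 := fun h => by
  have := congrArg QuadraticAlgebra.im h
  simp [θ] at this

/-- The case `N = 5`. -/
lemma three_case (α β : Fin 5 → Ok) (hprim : ∀ i ∈ Finset.univ, ¬ (θ ∣ α i ∧ θ ∣ β i))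
    (hrel : Rel 5 (lin Finset.univ α β)) : False := by
  classical
  have hsw := coeff_lin_swap Finset.univ β α
  have hcount := count_of_dvd_coeff θ κ3 κ3_eq_zero Finset.univ α β hprim 6
  set F := lin Finset.univ α β
  rw [Finset.card_univ, Fintype.card_fin] at hsw
  have r1 := hrel 1 (by norm_num)
  have r2 := hrel 2 (by norm_num)
  have r3 := hrel 3 (by norm_num)
  have r4 := hrel 4 (by norm_num)
  simp [bb, cc, oddFac, Nat.choose] at r1 r2 r3 r4
  have f5 : F.coeff 5 = 189 * F.coeff 1 - 1890 * F.coeff 0 :=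
    mul_left_cancel₀ (by norm_num : (5 : Ok) ≠ 0) (by linear_combination -r1)
  rw [f5] at r2 r3 r4
  have f2 : F.coeff 2 = 12 * F.coeff 1 - 75 * F.coeff 0 :=
    mul_left_cancel₀ (by norm_num : (945 : Ok) ≠ 0) (by linear_combination r2)
  have f3 : F.coeff 3 = 63 * F.coeff 1 - 525 * F.coeff 0 :=
    mul_left_cancel₀ (by norm_num : (945 : Ok) ≠ 0) (by linear_combination r3)
  have f4 : F.coeff 4 = 168 * F.coeff 1 - 1575 * F.coeff 0 :=
    mul_left_cancel₀ (by norm_num : (945 : Ok) ≠ 0) (by linear_combination r4)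
  have d2 : θ ∣ F.coeff 2 := ⟨(1 - θ) * (4 * F.coeff 1 - 25 * F.coeff 0), by
    linear_combination f2 + (4 * F.coeff 1 - 25 * F.coeff 0) * three_eq⟩
  have d3 : θ ∣ F.coeff 3 := ⟨(1 - θ) * (21 * F.coeff 1 - 175 * F.coeff 0), by
    linear_combination f3 + (21 * F.coeff 1 - 175 * F.coeff 0) * three_eq⟩
  have d4 : θ ∣ F.coeff 4 := ⟨(1 - θ) * (56 * F.coeff 1 - 525 * F.coeff 0), by
    linear_combination f4 + (56 * F.coeff 1 - 525 * F.coeff 0) * three_eq⟩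
  have d5 : θ ∣ F.coeff 5 := ⟨(1 - θ) * (63 * F.coeff 1 - 630 * F.coeff 0), by
    linear_combination f5 + (63 * F.coeff 1 - 630 * F.coeff 0) * three_eq⟩
  have hG := pow_dvd_of_dvd_coeff θ κ3 κ3_eq_zero Finset.univ β α
    (fun i hi h => hprim i hi h.symm) 4 (fun k hk => by
      rw [hsw k (by omega)]
      refine Dvd.dvd.mul_left ?_ _
      interval_cases k <;> assumption)
  -- `hG` is used for the reversed polynomial, whose coefficient of index `k` is `± F_(5 - k)`.
  have e3 : θ ^ 2 ∣ F.coeff 3 := by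
    have := hG 2 2 (by norm_num)
    rwa [hsw 2 (by norm_num), (isUnit_neg_one.pow 5).dvd_mul_left] at this
  have e4 : θ ^ 3 ∣ F.coeff 4 := by
    have := hG 1 3 (by norm_num)
    rwa [hsw 1 (by norm_num), (isUnit_neg_one.pow 5).dvd_mul_left] at this
  have k1 : κ3 (1 - θ) = 1 := by rw [map_sub, map_one, (κ3_eq_zero θ).2 dvd_rfl, sub_zero]
  have d0 : θ ∣ F.coeff 0 := by
    obtain ⟨c, hc⟩ := e3
    have : θ * ((1 - θ) * (175 * F.coeff 0)) = θ * (θ * (7 * (1 - θ) ^ 2 * F.coeff 1 - c)) := by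
      linear_combination f3 - hc - (175 * F.coeff 0) * three_eq +
        7 * F.coeff 1 * (3 + θ * (1 - θ)) * three_eq
    have := congrArg κ3 (mul_left_cancel₀ θ_ne_zero this)
    rw [map_mul κ3 θ, map_mul, map_mul, k1, (κ3_eq_zero θ).2 dvd_rfl, zero_mul, one_mul] at this
    refine (κ3_eq_zero _).1 ((mul_eq_zero.1 this).resolve_left ?_)
    rw [map_ofNat]; decide
  have d1 : θ ∣ F.coeff 1 := by
    obtain ⟨c, hc⟩ := e4
    obtain ⟨g, hg⟩ := d0
    have : θ * ((1 - θ) * (56 * F.coeff 1)) = θ * (θ * (θ * (c + 175 * (1 - θ) ^ 2 * g))) := by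
      linear_combination hc - f4 - (56 * F.coeff 1) * three_eq + 1575 * hg +
        175 * θ * g * (3 + θ * (1 - θ)) * three_eq
    have := congrArg κ3 (mul_left_cancel₀ θ_ne_zero this)
    rw [map_mul κ3 θ, map_mul, map_mul, k1, (κ3_eq_zero θ).2 dvd_rfl, zero_mul, one_mul] at this
    refine (κ3_eq_zero _).1 ((mul_eq_zero.1 this).resolve_left ?_)
    rw [map_ofNat]; decide
  have h6 := (hcount fun k hk => by interval_cases k <;> assumption).trans (Finset.card_le_univ _)
  simp at h6

lemma Rel.of_C_mul {N : ℕ} {F : Ok[X]} {c : Ok} (hc : c ≠ 0) (h : Rel N (C c * F)) : Rel N F := by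
  intro k hk
  have := h k hk
  simp only [coeff_C_mul] at this
  exact mul_left_cancel₀ hc (by linear_combination this)

/-- The relations are homogeneous, so the linear forms may be replaced by primitive ones. -/
lemma exists_primitive_rel {N : ℕ} {p : Ok} (hp : ¬ IsUnit p) (α β : Fin N → Ok)
    (hβ : ∀ i, β i ≠ 0) (hrel : Rel N (lin Finset.univ α β)) :
    ∃ α' β' : Fin N → Ok, (∀ i ∈ Finset.univ, ¬ (p ∣ α' i ∧ p ∣ β' i)) ∧
      Rel N (lin Finset.univ α' β') := by
  choose e α' β' h1 h2 h3 using fun i => exists_primitive p hp (α i) (β i) (hβ i)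
  refine ⟨α', β', fun i _ => h3 i, Rel.of_C_mul (c := ∏ i, p ^ e i) ?_ ?_⟩
  · refine Finset.prod_ne_zero_iff.2 fun i _ h => hβ i ?_
    rw [h2 i, h, zero_mul]
  · convert hrel using 1
    rw [lin, lin, map_prod, ← Finset.prod_mul_distrib]
    refine Finset.prod_congr rfl fun i _ => ?_
    rw [h1 i, h2 i, map_mul, map_mul]; ring

lemma no_rel {N : ℕ} (hN : 4 ≤ N) (α β : Fin N → Ok) (hβ : ∀ i, β i ≠ 0)
    (hrel : Rel N (lin Finset.univ α β)) : False := by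
  by_cases h5 : N = 5
  · subst h5
    obtain ⟨α', β', hprim, h⟩ := exists_primitive_rel not_isUnit_θ α β hβ hrel
    exact three_case α' β' hprim h
  · obtain ⟨α', β', hprim, h⟩ := exists_primitive_rel not_isUnit_two α β hβ hrel
    exact two_case hN h5 α' β' hprim h

lemma rel_of_quadrature (r : ℕ) (x z : Fin (r + 1) → ℂ) (α β : Fin (r + 1) → Ok)
    (hz : ∀ i, φ (β i) * z i = φ (α i))
    (hq : ∀ j : ℕ, j ≤ 2 * r →
      ∑ i, x i * z i ^ j = (-2 : ℂ) ^ j / (Nat.factorial (j + 1) : ℂ)) :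
    Rel (r + 1) (lin Finset.univ α β) := by
  set F := lin Finset.univ α β with hF
  have hroot (i) : ∑ k ∈ Finset.range (r + 1 + 1), φ (F.coeff k) * z i ^ k = 0 := by
    have h1 : (F.map φ).eval (z i) = 0 := by
      rw [hF, lin_map]
      exact lin_eval_eq_zero _ _ _ i (Finset.mem_univ _) _ (hz i)
    have h2 : (F.map φ).natDegree < r + 1 + 1 :=
      Nat.lt_succ_of_le (natDegree_map_le.trans (natDegree_lin_univ_le α β))
    rw [eval_eq_sum_range' h2] at h1
    simpa using h1
  have key := orth_relation (r + 1) (by omega) (fun k => φ (F.coeff k)) fun j hj => by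
    have : ∀ k ∈ Finset.range (r + 1 + 1),
        φ (F.coeff k) * ((-2) ^ (k + j) / ((k + j + 1).factorial : ℂ)) =
        ∑ i, (x i * z i ^ j) * (φ (F.coeff k) * z i ^ k) := by
      intro k hk
      have := Finset.mem_range.1 hk
      rw [← hq (k + j) (by omega), Finset.mul_sum]
      refine Finset.sum_congr rfl fun i _ => ?_
      ring
    rw [Finset.sum_congr rfl this, Finset.sum_comm]
    refine Finset.sum_eq_zero fun i _ => ?_
    rw [← Finset.mul_sum, hroot, mul_zero]
  intro k hk
  apply φ_injective
  simpa using key k hk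

end Ok

end

end BesselQuadrature

open Finset in
/-- For every integer `r ≥ 3`, there is no quadrature formula of degree `2r` for the
Bessel weight with `r + 1` nodes on `ℚ(√-11)`. -/
theorem no_bessel_quadrature_deg_two_r_on_Q_sqrt_neg11 (r : ℕ) (hr : 3 ≤ r) :
    ¬ ∃ (x z : Fin (r + 1) → ℂ),
      Function.Injective z ∧
      (∀ i, ∃ a b : ℚ, z i = (a : ℂ) + (b : ℂ) * (Real.sqrt 11 : ℂ) * Complex.I) ∧
      (∀ j : ℕ, j ≤ 2 * r →
        ∑ i, x i * z i ^ j = (-2 : ℂ) ^ j / (Nat.factorial (j + 1) : ℂ)) := by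
  rintro ⟨x, z, -, hz, hq⟩
  choose α β hβ hαβ using fun i => BesselQuadrature.Ok.exists_rep (z i) (hz i)
  exact BesselQuadrature.Ok.no_rel (by omega) α β hβ (BesselQuadrature.Ok.rel_of_quadrature r x z α β hαβ hq)
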